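/- In the de Bruijn digraph B(Δ, D), let c be a constant string (c_p = h for all positions p). Then for each k with 1 ≤ k ≤ D, the number of vertices at directed distance exactly k from c equals (Δ−1)·Δ^{k−1}, and consequently the sum of directed distances from c to all Δ^D vertices equals (D·Δ^{D+1} − (D+1)·Δ^D + 1)/(Δ−1). -/

import Mathlib

/-- Adjacency in the de Bruijn digraph `B(Δ, D)`: there is an edge
`u → v` iff the first `D−1` symbols of `v` equal the last `D−1` symbols
of `u`. -/
def deBruijnAdj {Δ D : ℕ} (u v : Fin D → Fin Δ) : Prop :=
  ∀ (k : ℕ) (h : k + 1 < D), v ⟨k, Nat.lt_of_succ_lt h⟩ = u ⟨k + 1, h⟩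

/-- `f` is a directed walk of length `n` in the de Bruijn digraph. -/
def deBruijnWalk {Δ D : ℕ} (n : ℕ) (f : ℕ → Fin D → Fin Δ) : Prop :=
  ∀ k < n, deBruijnAdj (f k) (f (k + 1))

/-- Directed graph distance in the de Bruijn digraph: the length of a
shortest directed walk from `x` to `y` (`0` from a vertex to itself). -/
noncomputable def deBruijnDist {Δ D : ℕ} (x y : Fin D → Fin Δ) : ℕ :=
  sInf {n : ℕ | ∃ f : ℕ → Fin D → Fin Δ, f 0 = x ∧ f n = y ∧ deBruijnWalk n f}

/-!
A walk of length `k` shifts the string `k` places to the left and appends `k` arbitrary symbols, so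
it ends exactly at the strings `v` whose first `D - k` symbols are the last `D - k` symbols of the
start. From the constant string `h ⋯ h`, this condition says that the first `D - k` symbols of `v`
are all `h`; it gets weaker as `k` grows, so the ball of radius `k ≤ D` has `Δ ^ k` elements.
Differences of consecutive balls give the spheres, and summing `k * (Δ - 1) * Δ ^ (k - 1)` over
`1 ≤ k ≤ D` gives the total distance.
-/

section

open Finset

theorem card_filter_forall_mem_eq {ι α : Type*} [Fintype ι] [DecidableEq ι] [Fintype α]
    (s : Finset ι) (x : ι → α) [DecidablePred fun v : ι → α ↦ ∀ i ∈ s, v i = x i] :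
    #{v : ι → α | ∀ i ∈ s, v i = x i} = Fintype.card α ^ (Fintype.card ι - #s) := by
  classical
  have filter_eq_piFinset : ({v : ι → α | ∀ i ∈ s, v i = x i} : Finset (ι → α)) =
      Fintype.piFinset fun i ↦ if i ∈ s then {x i} else univ := by
    ext v
    simp only [mem_filter_univ, Fintype.mem_piFinset]
    refine forall_congr' fun i ↦ ?_
    split_ifs with hi <;> simp [hi]
  rw [filter_eq_piFinset, Fintype.card_piFinset]
  simp [apply_ite card, prod_ite, filter_not, card_univ_sdiff]

theorem sum_range_add_one_mul_pow_mul_sub_one_sq {R : Type*} [CommRing R] (x : R) (n : ℕ) :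
    (∑ k ∈ range n, ((k : R) + 1) * x ^ k) * (x - 1) ^ 2 =
      n * x ^ (n + 1) - (n + 1) * x ^ n + 1 := by
  induction n with
  | zero => simp
  | succ n ih =>
    rw [sum_range_succ, add_mul, ih]
    push_cast
    ring

variable {Δ D : ℕ}

theorem deBruijnWalk.apply_eq_apply_add {n : ℕ} {f : ℕ → Fin D → Fin Δ} (hf : deBruijnWalk n f) :
    ∀ {i : ℕ} (hi : i + n < D), f n ⟨i, by omega⟩ = f 0 ⟨i + n, hi⟩ := by
  induction n with
  | zero => exact fun _ ↦ rfl
  | succ n ih =>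
    intro i hi
    have hf_init : deBruijnWalk n f := fun k hk ↦ hf k (by omega)
    calc f (n + 1) ⟨i, _⟩ = f n ⟨i + 1, by omega⟩ := hf n n.lt_succ_self i (by omega)
      _ = f 0 ⟨i + 1 + n, by omega⟩ := ih hf_init (by omega)
      _ = f 0 ⟨i + (n + 1), hi⟩ := by simp only [Nat.add_right_comm, Nat.add_assoc]

theorem exists_deBruijnWalk_iff {x v : Fin D → Fin Δ} {k : ℕ} :
    (∃ f : ℕ → Fin D → Fin Δ, f 0 = x ∧ f k = v ∧ deBruijnWalk k f) ↔
      ∀ (i : ℕ) (hi : i + k < D), v ⟨i, by omega⟩ = x ⟨i + k, hi⟩ := by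
  constructor
  · rintro ⟨f, rfl, rfl, hf⟩ i hi
    exact hf.apply_eq_apply_add hi
  · intro overlap
    -- Slide a window of width `D` along a word with `x` at position `0` and `v` at position `k`;
    -- reducing indices mod `D` supplies letters for the gap between them when `D < k`.
    let word (hD : 0 < D) (m : ℕ) : Fin Δ :=
      if hm : k ≤ m ∧ m - k < D then v ⟨m - k, hm.2⟩ else x ⟨m % D, m.mod_lt hD⟩
    refine ⟨fun j p ↦ word p.pos (j + p), ?_, ?_, ?_⟩
    · funext p
      by_cases hp : k ≤ p
      · have := overlap (p - k) (by omega)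
        simp_all [word, Nat.sub_lt_of_lt p.isLt]
      · simp [word, hp, Nat.mod_eq_of_lt p.isLt]
    · simp [word]
    · intro j _ i hi
      simp only [Nat.add_assoc, Nat.add_comm 1 i]

theorem exists_deBruijnWalk_of_le (x v : Fin D → Fin Δ) {k : ℕ} (hk : D ≤ k) :
    ∃ f : ℕ → Fin D → Fin Δ, f 0 = x ∧ f k = v ∧ deBruijnWalk k f :=
  exists_deBruijnWalk_iff.2 fun i hi ↦ by omega

theorem deBruijnDist_le (x v : Fin D → Fin Δ) : deBruijnDist x v ≤ D :=
  Nat.sInf_le (exists_deBruijnWalk_of_le x v le_rfl)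

theorem exists_deBruijnWalk_deBruijnDist (x v : Fin D → Fin Δ) :
    ∃ f : ℕ → Fin D → Fin Δ,
      f 0 = x ∧ f (deBruijnDist x v) = v ∧ deBruijnWalk (deBruijnDist x v) f :=
  Nat.sInf_mem
    (s := {n | ∃ f : ℕ → Fin D → Fin Δ, f 0 = x ∧ f n = v ∧ deBruijnWalk n f})
    ⟨D, exists_deBruijnWalk_of_le x v le_rfl⟩

theorem deBruijnDist_const_le_iff {h : Fin Δ} {v : Fin D → Fin Δ} {k : ℕ} :
    deBruijnDist (fun _ ↦ h) v ≤ k ↔ ∀ i : Fin D, i + k < D → v i = h := by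
  constructor
  · intro hk i hi
    exact exists_deBruijnWalk_iff.1 (exists_deBruijnWalk_deBruijnDist (fun _ ↦ h) v) i (by omega)
  · exact fun hv ↦ Nat.sInf_le (exists_deBruijnWalk_iff.2 fun i hi ↦ hv ⟨i, by omega⟩ hi)

theorem card_deBruijnDist_const_le (h : Fin Δ) {k : ℕ} (hk : k ≤ D) :
    #{v : Fin D → Fin Δ | deBruijnDist (fun _ ↦ h) v ≤ k} = Δ ^ k := by
  have card_fixed : #{i : Fin D | i + k < D} = D - k := by
    simp [← Nat.lt_sub_iff_add_lt, Fin.card_filter_val_lt]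
  calc #{v : Fin D → Fin Δ | deBruijnDist (fun _ ↦ h) v ≤ k}
      = #{v : Fin D → Fin Δ | ∀ i ∈ ({i : Fin D | i + k < D} : Finset (Fin D)), v i = h} := by
        simp only [deBruijnDist_const_le_iff, mem_filter_univ]
    _ = Δ ^ (D - (D - k)) := by
        rw [card_filter_forall_mem_eq _ fun _ ↦ h, card_fixed, Fintype.card_fin, Fintype.card_fin]
    _ = Δ ^ k := by rw [Nat.sub_sub_self hk]

theorem card_deBruijnDist_const_eq_add_one (h : Fin Δ) {k : ℕ} (hk : k < D) :
    #{v : Fin D → Fin Δ | deBruijnDist (fun _ ↦ h) v = k + 1} = (Δ - 1) * Δ ^ k := by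
  have ball_succ : #{v : Fin D → Fin Δ | deBruijnDist (fun _ ↦ h) v ≤ k + 1} =
      #{v : Fin D → Fin Δ | deBruijnDist (fun _ ↦ h) v ≤ k} +
        #{v : Fin D → Fin Δ | deBruijnDist (fun _ ↦ h) v = k + 1} := by
    simp only [Nat.le_add_one_iff, filter_or]
    exact card_union_of_disjoint (disjoint_filter.2 fun v _ hle heq ↦ by omega)
  rw [card_deBruijnDist_const_le h hk, card_deBruijnDist_const_le h hk.le, pow_succ'] at ball_succ
  rw [Nat.sub_mul, one_mul, ball_succ, Nat.add_sub_cancel_left]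

theorem sum_deBruijnDist_const (R : Type*) [Ring R] (h : Fin Δ) :
    ∑ v : Fin D → Fin Δ, (deBruijnDist (fun _ ↦ h) v : R) =
      ∑ k ∈ range D, ((Δ : R) - 1) * (Δ : R) ^ k * (k + 1) := by
  have dist_mem_range (v : Fin D → Fin Δ) (_ : v ∈ univ) :
      deBruijnDist (fun _ ↦ h) v ∈ range (D + 1) :=
    mem_range_succ_iff.2 (deBruijnDist_le _ v)
  rw [← sum_fiberwise_of_maps_to' dist_mem_range fun k ↦ (k : R), sum_range_succ']
  simp only [sum_const, nsmul_eq_mul, Nat.cast_zero, mul_zero, add_zero]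
  refine sum_congr rfl fun k hk ↦ ?_
  rw [card_deBruijnDist_const_eq_add_one h (mem_range.1 hk)]
  push_cast [Nat.cast_pred h.pos]
  rfl

theorem sum_deBruijnDist_const_mul_sub_one (R : Type*) [CommRing R] (h : Fin Δ) :
    (∑ v : Fin D → Fin Δ, (deBruijnDist (fun _ ↦ h) v : R)) * ((Δ : R) - 1) =
      D * (Δ : R) ^ (D + 1) - (D + 1) * (Δ : R) ^ D + 1 := by
  rw [← sum_range_add_one_mul_pow_mul_sub_one_sq, sum_deBruijnDist_const, sum_mul, sum_mul]
  exact sum_congr rfl fun k _ ↦ by ring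

end

/-- **Distance distribution from a constant de Bruijn node.**
In `B(Δ, D)` with `Δ ≥ 2`, `D ≥ 1`, let `c` be a constant string
(`c p = h` for all `p`).  For each `1 ≤ k ≤ D` the number of vertices at
directed distance exactly `k` from `c` is `(Δ−1)·Δ^{k−1}`, and consequently
the sum of directed distances from `c` to all `Δ^D` vertices equals
`(D·Δ^{D+1} − (D+1)·Δ^D + 1)/(Δ−1)`. -/
theorem deBruijn_constant_node_access_cost (Δ D : ℕ) (hΔ : 2 ≤ Δ) (hD : 1 ≤ D)
    (h : Fin Δ) (c : Fin D → Fin Δ) (hc : ∀ p, c p = h) :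
    (∀ k : ℕ, 1 ≤ k → k ≤ D →
      Nat.card {v : Fin D → Fin Δ // deBruijnDist c v = k}
        = (Δ - 1) * Δ ^ (k - 1)) ∧
    (∑ v : Fin D → Fin Δ, (deBruijnDist c v : ℝ))
      = ((D : ℝ) * (Δ : ℝ) ^ (D + 1) - ((D : ℝ) + 1) * (Δ : ℝ) ^ D + 1)
        / ((Δ : ℝ) - 1) := by
  obtain rfl : c = fun _ ↦ h := funext hc
  refine ⟨fun k hk hkD ↦ ?_, ?_⟩
  · obtain ⟨j, rfl⟩ := Nat.exists_eq_add_of_le' hk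
    rw [Nat.card_eq_fintype_card, Fintype.card_subtype, Nat.add_sub_cancel]
    exact card_deBruijnDist_const_eq_add_one h hkD
  · have hΔ_sub_one : (Δ : ℝ) - 1 ≠ 0 := sub_ne_zero.2 (Nat.cast_ne_one.2 (by omega))
    exact eq_div_of_mul_eq hΔ_sub_one (sum_deBruijnDist_const_mul_sub_one ℝ h)
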